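/- For complex s with Re(s) > 1, ∑_{n=1}^∞ λ_α(n)/n^s = (1 + 2^{-s} + 12^{-s}) · ∏_p (1 - p^{-s}), where λ is the Liouville function and λ_α its α-contraction. -/

import Mathlib

open Finset

noncomputable def fibAlpha (n : ℕ) : ℕ := sInf {m | 0 < m ∧ n ∣ Nat.fib m}

/-- The α-contraction of the Liouville function `λ(m) = (-1)^Ω(m)`. -/
noncomputable def liouvilleAlpha (n : ℕ) : ℤ :=
  ∑ m ∈ (Icc 1 (Nat.fib n)).filter (fun m => fibAlpha m = n),
    (-1 : ℤ) ^ (ArithmeticFunction.cardFactors m)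

/-- Lucas numbers. -/
def cohnL (n : ℕ) : ℤ := 2 * (Nat.fib (n + 1) : ℤ) - Nat.fib n

theorem cohnL_rec (n : ℕ) : cohnL (n + 2) = cohnL (n + 1) + cohnL n := by
  simp only [cohnL, Nat.fib_add_two, Nat.cast_add]; ring

theorem cohn_cassini (k : ℕ) : (Nat.fib (k + 1) : ℤ) ^ 2 - Nat.fib (k + 1) * Nat.fib k
    - (Nat.fib k : ℤ) ^ 2 = (-1) ^ k := by
  induction k with
  | zero => simp
  | succ k ih =>
    rw [pow_succ (-1 : ℤ), ← ih, Nat.fib_add_two]; push_cast; ring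

theorem cohn_expand (u : ℕ → ℤ) (hu : ∀ n, u (n + 2) = u (n + 1) + u n) (m k : ℕ) :
    u (m + k) = u (m + 1) * Nat.fib k + u m * (Nat.fib (k + 1) - Nat.fib k) ∧
    u (m + k + 1) = u (m + 1) * Nat.fib (k + 1) + u m * Nat.fib k := by
  induction k with
  | zero => simp
  | succ k ih =>
    obtain ⟨h1, h2⟩ := ih
    refine ⟨?_, ?_⟩
    · rw [← add_assoc, h2, Nat.fib_add_two]; push_cast; ring
    · have := hu (m + k)
      rw [show m + (k + 1) + 1 = m + k + 2 by ring, this, h1, h2, Nat.fib_add_two]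
      push_cast; ring

theorem cohn_double (u : ℕ → ℤ) (hu : ∀ n, u (n + 2) = u (n + 1) + u n) (m k : ℕ) :
    u (m + 2 * k) = cohnL k * u (m + k) - (-1) ^ k * u m := by
  have h1 := (cohn_expand u hu m k).1
  have h2 := (cohn_expand u hu m k).2
  have h3 := (cohn_expand u hu (m + k) k).1
  rw [show m + 2 * k = m + k + k by ring, h3, h2, h1, ← cohn_cassini k, cohnL]
  ring

theorem cohn_odd_mult (u : ℕ → ℤ) (hu : ∀ n, u (n + 2) = u (n + 1) + u n) (m k : ℕ)
    (hk : Even k) (t : ℕ) : cohnL k ∣ u (m + 2 * k * (2 * t + 1)) + u m := by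
  have step : ∀ j, cohnL k ∣ u (j + 2 * k) + u j := by
    intro j
    rw [cohn_double u hu, hk.neg_one_pow]
    exact ⟨u (j + k), by ring⟩
  induction t with
  | zero => simpa using step m
  | succ t ih =>
    have a := step (m + 2 * k * (2 * t + 1))
    have b := step (m + 2 * k * (2 * t + 1) + 2 * k)
    have e : m + 2 * k * (2 * (t + 1) + 1) = m + 2 * k * (2 * t + 1) + 2 * k + 2 * k := by ring
    rw [e]
    have := (b.sub a).add ih
    have e2 : ∀ a b c d : ℤ, a + b - (b + c) + (c + d) = a + d := by intros; ring
    rwa [e2] at this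

theorem cohn_reduce (N : ℕ) (hN : 4 ∣ N) (h0 : N ≠ 0) :
    ∃ k t, Even k ∧ ¬ 3 ∣ k ∧ (8 ∣ N → 4 ∣ k) ∧ N = 2 * k * (2 * t + 1) := by
  obtain ⟨e, n', h3, h⟩ := Nat.exists_eq_pow_mul_and_not_dvd h0 3 (by norm_num)
  have hodd : Odd (3 ^ e) := Odd.pow (by decide)
  obtain ⟨t, ht⟩ := hodd
  have c4 : Nat.Coprime 4 (3 ^ e) := Nat.Coprime.pow_right _ (by norm_num)
  have c8 : Nat.Coprime 8 (3 ^ e) := Nat.Coprime.pow_right _ (by norm_num)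
  have h4 : 4 ∣ n' := c4.dvd_of_dvd_mul_left (h ▸ hN)
  refine ⟨n' / 2, t, ?_, ?_, ?_, ?_⟩
  · rw [Nat.even_iff]; omega
  · omega
  · intro h8
    have : 8 ∣ n' := c8.dvd_of_dvd_mul_left (h ▸ h8)
    omega
  · rw [h, ht, show 2 * (n' / 2) = n' by omega]; ring

theorem cohnL_mod (n : ℕ) : cohnL n % 24 = cohnL (n % 24) % 24 := by
  induction n using Nat.strong_induction_on with
  | _ n ih =>
    by_cases h : n < 24
    · rw [Nat.mod_eq_of_lt h]
    · obtain ⟨m, rfl⟩ : ∃ m, n = m + 24 := ⟨n - 24, by omega⟩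
      rw [Nat.add_mod_right, ← ih m (by omega)]
      have h1 := (cohn_expand cohnL cohnL_rec m 24).1
      rw [h1]
      have e1 : Nat.fib 24 = 46368 := by norm_num
      have e2 : Nat.fib 25 = 75025 := by norm_num
      rw [e1, e2]
      push_cast
      omega

theorem cohnL_pos (n : ℕ) : 0 < cohnL n := by
  have h1 : Nat.fib n ≤ Nat.fib (n + 1) := Nat.fib_le_fib_succ
  have h2 : 0 < Nat.fib (n + 1) := Nat.fib_pos.2 (by omega)
  unfold cohnL; omega

theorem cohnL_mod_four (k : ℕ) (hk : Even k) (h3 : ¬ 3 ∣ k) : cohnL k % 4 = 3 := by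
  have h := cohnL_mod k
  rw [Nat.even_iff] at hk
  have hlt : k % 24 < 24 := Nat.mod_lt _ (by norm_num)
  generalize hr : k % 24 = r at *
  have : r % 2 = 0 := by omega
  have : r % 3 ≠ 0 := by omega
  generalize cohnL k = X at h ⊢
  interval_cases r <;> first | omega | (norm_num [cohnL] at h; omega)

theorem cohnL_mod_three (k : ℕ) (hk : 4 ∣ k) : cohnL k % 3 ≠ 0 := by
  have h := cohnL_mod k
  have hlt : k % 24 < 24 := Nat.mod_lt _ (by norm_num)
  generalize hr : k % 24 = r at *
  have : r % 4 = 0 := by omega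
  generalize cohnL k = X at h ⊢
  interval_cases r <;> first | omega | (norm_num [cohnL] at h; omega)

theorem cohnL_mod_eight (k : ℕ) (hk : k % 2 = 1) : cohnL k % 8 ≠ 0 ∧ cohnL k % 8 ≠ 2 := by
  have h := cohnL_mod k
  have hlt : k % 24 < 24 := Nat.mod_lt _ (by norm_num)
  generalize hr : k % 24 = r at *
  have : r % 2 = 1 := by omega
  generalize cohnL k = X at h ⊢
  interval_cases r <;> first | omega | (norm_num [cohnL] at h; omega)

theorem cohn_nonres (Q c x : ℤ) (hQ : 0 < Q) (h4 : Q % 4 = 3) (hc : Int.gcd c Q = 1)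
    (h : Q ∣ x ^ 2 + c ^ 2) : False := by
  lift Q to ℕ using hQ.le
  have h4' : Q % 4 = 3 := by omega
  have hodd : Odd Q := Nat.odd_iff.2 (by omega)
  have hJ : jacobiSym (-1 * c ^ 2) Q = -1 := by
    rw [jacobiSym.mul_left, jacobiSym.at_neg_one hodd, ZMod.χ₄_nat_three_mod_four h4',
      jacobiSym.pow_left, jacobiSym.sq_one hc]
    norm_num
  apply ZMod.nonsquare_of_jacobiSym_eq_neg_one hJ
  refine ⟨(x : ZMod Q), ?_⟩
  have := (ZMod.intCast_zmod_eq_zero_iff_dvd (x ^ 2 + c ^ 2) Q).2 h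
  push_cast at this ⊢
  linear_combination -this

/-- Combined reduction step. -/
theorem cohn_step (u : ℕ → ℤ) (hu : ∀ n, u (n + 2) = u (n + 1) + u n) (N m : ℕ)
    (hN : 4 ∣ N) (h0 : N ≠ 0) (a c x : ℤ) (ha : a * u (m + N) = x ^ 2) (hc : a * u m = c ^ 2)
    (hcop : c = 1 ∨ c = 2 ∨ (c = 6 ∧ 8 ∣ N)) : False := by
  obtain ⟨k, t, hk, h3, h8, rfl⟩ := cohn_reduce N hN h0
  have hd := cohn_odd_mult u hu m k hk t
  have h4 := cohnL_mod_four k hk h3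
  refine cohn_nonres (cohnL k) c x (cohnL_pos k) h4 ?_ ?_
  · have hg2 : IsCoprime (2 : ℤ) (cohnL k) := by
      refine ⟨-(cohnL k / 2), 1, ?_⟩; omega
    rw [← Int.isCoprime_iff_gcd_eq_one]
    rcases hcop with rfl | rfl | ⟨rfl, h⟩
    · exact isCoprime_one_left
    · exact hg2
    · have h3' := cohnL_mod_three k (h8 h)
      have hg3 : IsCoprime (3 : ℤ) (cohnL k) := by
        rw [Prime.coprime_iff_not_dvd Int.prime_three]; omega
      simpa using hg2.mul_left hg3
  · rw [← ha, ← hc, ← mul_add]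
    exact hd.mul_left a

theorem int_sq_mod8 (x : ℤ) : x ^ 2 % 8 = 0 ∨ x ^ 2 % 8 = 1 ∨ x ^ 2 % 8 = 4 := by
  have : x % 8 = 0 ∨ x % 8 = 1 ∨ x % 8 = 2 ∨ x % 8 = 3 ∨ x % 8 = 4 ∨ x % 8 = 5 ∨ x % 8 = 6 ∨
    x % 8 = 7 := by omega
  rcases this with h | h | h | h | h | h | h | h <;> simp [pow_two, Int.mul_emod, h]

theorem cohnL_sq (n : ℕ) (x : ℤ) (h : cohnL n = x ^ 2) : n = 1 ∨ n = 3 := by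
  have hn : n % 2 = 0 ∨ n % 4 = 1 ∨ n % 4 = 3 := by omega
  rcases hn with hn | hn | hn
  · exfalso
    obtain ⟨k, rfl⟩ : ∃ k, n = 2 * k := ⟨n / 2, by omega⟩
    have h1 := cohn_double cohnL cohnL_rec 0 k
    have e0 : cohnL 0 = 2 := by norm_num [cohnL]
    rw [zero_add, zero_add, h, ← pow_two, e0] at h1
    have a := int_sq_mod8 x
    have b := int_sq_mod8 (cohnL k)
    rcases neg_one_pow_eq_or ℤ k with hk | hk <;> rw [hk] at h1 <;> omega
  · by_contra hne
    refine cohn_step cohnL cohnL_rec (n - 1) 1 (by omega) (by omega) 1 1 x ?_ ?_ (by simp)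
    · rw [show 1 + (n - 1) = n by omega, h, one_mul]
    · norm_num [cohnL]
  · by_contra hne
    refine cohn_step cohnL cohnL_rec (n - 3) 3 (by omega) (by omega) 1 2 x ?_ ?_ (by simp)
    · rw [show 3 + (n - 3) = n by omega, h, one_mul]
    · norm_num [cohnL]

theorem cohnL_two_sq (n : ℕ) (x : ℤ) (h : cohnL n = 2 * x ^ 2) : n = 0 ∨ n = 6 := by
  have hn : n % 2 = 1 ∨ n % 4 = 0 ∨ n % 8 = 6 ∨ n % 8 = 2 := by omega
  have h' : 2 * cohnL n = (2 * x) ^ 2 := by rw [h]; ring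
  rcases hn with hn | hn | hn | hn
  · exfalso
    have a := int_sq_mod8 x
    have b := cohnL_mod_eight n hn
    omega
  · by_contra hne
    refine cohn_step cohnL cohnL_rec n 0 (by omega) (by omega) 2 2 (2 * x) ?_ ?_ (by simp)
    · rw [zero_add, h']
    · norm_num [cohnL]
  · by_contra hne
    refine cohn_step cohnL cohnL_rec (n - 6) 6 (by omega) (by omega) 2 6 (2 * x) ?_ ?_
      (by right; right; exact ⟨rfl, by omega⟩)
    · rw [show 6 + (n - 6) = n by omega, h']
    · norm_num [cohnL]
  · exfalso
    let v : ℕ → ℤ := fun j => if j = 0 then 18 else if j = 1 then -11 else if j = 2 then 7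
      else if j = 3 then -4 else if j = 4 then 3 else if j = 5 then -1 else cohnL (j - 6)
    have hv6 : ∀ j, v (j + 6) = cohnL j := by intro j; simp [v]
    have hv : ∀ j, v (j + 2) = v (j + 1) + v j := by
      intro j
      by_cases hj : j < 6
      · interval_cases j <;> norm_num [v, cohnL]
      · obtain ⟨i, rfl⟩ : ∃ i, j = i + 6 := ⟨j - 6, by omega⟩
        have := cohnL_rec i
        rw [← hv6, ← hv6, ← hv6] at this
        convert this using 2
    refine cohn_step v hv (n + 6) 0 (by omega) (by omega) 2 6 (2 * x) ?_ ?_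
      (by right; right; exact ⟨rfl, by omega⟩)
    · rw [zero_add, hv6, h']
    · norm_num [v]

theorem nat_sq_of_coprime (a b x : ℕ) (hc : Nat.Coprime a b) (h : a * b = x ^ 2) :
    (∃ y, a = y ^ 2) ∧ (∃ y, b = y ^ 2) := by
  have hu : IsUnit (gcd a b) := by
    have : gcd a b = 1 := hc
    rw [this]; exact isUnit_one
  have hu' : IsUnit (gcd b a) := by
    have : gcd b a = 1 := hc.symm
    rw [this]; exact isUnit_one
  exact ⟨exists_eq_pow_of_mul_eq_pow hu h, exists_eq_pow_of_mul_eq_pow hu' (by rw [mul_comm, h])⟩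

theorem cohn_fib_sq (n x : ℕ) (h : Nat.fib n = x ^ 2) : n = 0 ∨ n = 1 ∨ n = 2 ∨ n = 12 := by
  have hn : n % 2 = 0 ∨ n % 4 = 1 ∨ n % 4 = 3 := by omega
  have hz : (Nat.fib n : ℤ) = (x : ℤ) ^ 2 := by exact_mod_cast h
  have frec : ∀ n, (fun n => (Nat.fib n : ℤ)) (n + 2)
      = (fun n => (Nat.fib n : ℤ)) (n + 1) + (fun n => (Nat.fib n : ℤ)) n := by
    intro n; simp only [Nat.fib_add_two]; push_cast; ring
  rcases hn with hn | hn | hn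
  · obtain ⟨m, rfl⟩ : ∃ m, n = 2 * m := ⟨n / 2, by omega⟩
    have hle : Nat.fib m ≤ Nat.fib (m + 1) := Nat.fib_le_fib_succ
    obtain ⟨l, hl⟩ : ∃ l, l = 2 * Nat.fib (m + 1) - Nat.fib m := ⟨_, rfl⟩
    have hL : cohnL m = l := by unfold cohnL; omega
    have hprod : Nat.fib m * l = x ^ 2 := by rw [← h, Nat.fib_two_mul, hl]
    have hcop := Nat.fib_coprime_fib_succ m
    have hlf : l + Nat.fib m = 2 * Nat.fib (m + 1) := by omega
    have hgcd : Nat.gcd (Nat.fib m) l ∣ 2 := by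
      have h1 : Nat.gcd (Nat.fib m) l ∣ 2 * Nat.fib (m + 1) := by
        rw [← hlf]; exact dvd_add (Nat.gcd_dvd_right _ _) (Nat.gcd_dvd_left _ _)
      have h2 : Nat.Coprime (Nat.gcd (Nat.fib m) l) (Nat.fib (m + 1)) :=
        Nat.Coprime.coprime_dvd_left (Nat.gcd_dvd_left _ _) hcop
      exact h2.dvd_of_dvd_mul_right h1
    rcases (Nat.dvd_prime Nat.prime_two).1 hgcd with hg | hg
    · obtain ⟨-, y, hy⟩ := nat_sq_of_coprime _ _ x hg hprod
      rcases cohnL_sq m y (by rw [hL, hy]; push_cast; rfl) with rfl | rfl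
      · simp
      · exfalso
        have e : Nat.fib (2 * 3) = 8 := by norm_num
        rw [e] at h
        have : x < 3 := by nlinarith
        interval_cases x <;> omega
    · obtain ⟨a, ha⟩ : 2 ∣ Nat.fib m := hg ▸ Nat.gcd_dvd_left _ _
      obtain ⟨b, hb⟩ : 2 ∣ l := hg ▸ Nat.gcd_dvd_right _ _
      rw [ha, hb] at hg hprod
      rw [Nat.gcd_mul_left] at hg
      have hab : Nat.Coprime a b := by unfold Nat.Coprime; omega
      have h2x : 2 ∣ x := Nat.prime_two.dvd_of_dvd_pow (n := 2) ⟨a * (2 * b), by rw [← hprod]; ring⟩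
      obtain ⟨w, rfl⟩ := h2x
      obtain ⟨-, y, hy⟩ := nat_sq_of_coprime a b w hab (by nlinarith)
      rcases cohnL_two_sq m y (by rw [hL, hb, hy]; push_cast; rfl) with rfl | rfl <;> simp
  · by_contra hne
    refine cohn_step (fun n => (Nat.fib n : ℤ)) frec (n - 1) 1 (by omega) (by omega) 1 1 x ?_ ?_ (by simp)
    · rw [show 1 + (n - 1) = n by omega, one_mul]; exact hz
    · simp
  · exfalso
    let v : ℕ → ℤ := fun j => if j = 0 then 1 else Nat.fib (j - 1)
    have hv1 : ∀ j, v (j + 1) = Nat.fib j := by intro j; simp [v]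
    have hv : ∀ j, v (j + 2) = v (j + 1) + v j := by
      intro j
      rcases j with _ | i
      · simp [v]
      · have := frec i
        simp only [← hv1] at this
        convert this using 2
    refine cohn_step v hv (n + 1) 0 (by omega) (by omega) 1 1 x ?_ ?_ (by simp)
    · rw [zero_add, hv1, one_mul, hz]
    · simp [v]

theorem fib_isSquare_iff (n : ℕ) (hn : n ≠ 0) :
    IsSquare (Nat.fib n) ↔ n = 1 ∨ n = 2 ∨ n = 12 := by
  constructor
  · rintro ⟨r, hr⟩
    rcases cohn_fib_sq n r (by rw [hr, pow_two]) with h | h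
    · exact absurd h hn
    · exact h
  · rintro (rfl | rfl | rfl)
    · exact ⟨1, by norm_num⟩
    · exact ⟨1, by norm_num⟩
    · exact ⟨12, by norm_num⟩

open ArithmeticFunction in
theorem sum_liouville_divisors (N : ℕ) (hN : N ≠ 0) :
    ∑ d ∈ N.divisors, liouville d = if IsSquare N then 1 else 0 := by
  have hmul : (liouville * (zeta : ArithmeticFunction ℤ)).IsMultiplicative :=
    isMultiplicative_liouville.mul isMultiplicative_zeta.natCast
  have hpp : ∀ p e : ℕ, p.Prime → (liouville * (zeta : ArithmeticFunction ℤ)) (p ^ e)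
      = if Even e then 1 else 0 := by
    intro p e hp
    rw [coe_mul_zeta_apply, Nat.divisors_prime_pow hp, Finset.sum_map]
    have : ∀ i ∈ range (e + 1), liouville (p ^ i) = (-1) ^ i := by
      intro i _
      rw [liouville_apply (pow_ne_zero _ hp.ne_zero), cardFactors_apply_prime_pow hp]
    simp only [Function.Embedding.coeFn_mk]
    rw [Finset.sum_congr rfl this, Finset.sum_range_succ]
    rw [neg_one_geom_sum]
    split_ifs with h
    · simp [h.neg_one_pow]
    · simp [(Nat.not_even_iff_odd.1 h).neg_one_pow]
  rw [← coe_mul_zeta_apply, hmul.multiplicative_factorization _ hN, Finsupp.prod,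
    Finset.prod_congr rfl (fun p hp => hpp p _ (Nat.prime_of_mem_primeFactors (by simpa using hp)))]
  split_ifs with h
  · obtain ⟨r, rfl⟩ := h
    apply Finset.prod_eq_one
    intro p _
    have hr : r ≠ 0 := by rintro rfl; simp at hN
    rw [Nat.factorization_mul hr hr, if_pos]
    simp
  · rw [Finset.prod_eq_zero_iff]
    by_contra hcon
    apply h
    push Not at hcon
    have he : ∀ p, Even (N.factorization p) := by
      intro p
      by_cases hp : p ∈ N.factorization.support
      · by_contra h'
        exact hcon p hp (if_neg h')
      · rw [Finsupp.notMem_support_iff.1 hp]; exact Even.zero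
    refine ⟨N.factorization.prod fun p e => p ^ (e / 2), ?_⟩
    conv_lhs => rw [← Nat.prod_factorization_pow_eq_self hN]
    rw [Finsupp.prod, Finsupp.prod, ← Finset.prod_mul_distrib]
    apply Finset.prod_congr rfl
    intro p _
    obtain ⟨j, hj⟩ := he p
    rw [← pow_add]
    congr 1
    omega

theorem fibAlpha_spec {m n : ℕ} (hn : n ≠ 0) (h : m ∣ Nat.fib n) :
    0 < fibAlpha m ∧ m ∣ Nat.fib (fibAlpha m) :=
  Nat.sInf_mem (s := {k | 0 < k ∧ m ∣ Nat.fib k}) ⟨n, Nat.pos_of_ne_zero hn, h⟩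

theorem fibAlpha_dvd {m n : ℕ} (hn : n ≠ 0) (h : m ∣ Nat.fib n) : fibAlpha m ∣ n := by
  obtain ⟨h1, h2⟩ := fibAlpha_spec hn h
  have hg : m ∣ Nat.fib (Nat.gcd (fibAlpha m) n) := by
    rw [Nat.fib_gcd]; exact Nat.dvd_gcd h2 h
  have hle : fibAlpha m ≤ Nat.gcd (fibAlpha m) n :=
    Nat.sInf_le ⟨Nat.gcd_pos_of_pos_left _ h1, hg⟩
  have : Nat.gcd (fibAlpha m) n = fibAlpha m :=
    le_antisymm (Nat.le_of_dvd h1 (Nat.gcd_dvd_left _ _)) hle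
  rw [← this]; exact Nat.gcd_dvd_right _ _

theorem sum_liouvilleAlpha (n : ℕ) (hn : n ≠ 0) :
    ∑ d ∈ n.divisors, liouvilleAlpha d = if n = 1 ∨ n = 2 ∨ n = 12 then 1 else 0 := by
  have hF : Nat.fib n ≠ 0 := (Nat.fib_pos.2 (Nat.pos_of_ne_zero hn)).ne'
  have h1 := sum_liouville_divisors (Nat.fib n) hF
  simp only [fib_isSquare_iff n hn] at h1
  rw [← h1, ← Finset.sum_fiberwise_of_maps_to (s := (Nat.fib n).divisors) (t := n.divisors) (g := fibAlpha)]
  · apply Finset.sum_congr rfl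
    intro d hd
    have hdn := Nat.dvd_of_mem_divisors hd
    have hd0 : 0 < d := Nat.pos_of_mem_divisors hd
    unfold liouvilleAlpha
    apply Finset.sum_congr
    · ext m
      simp only [Finset.mem_filter, Finset.mem_Icc, Nat.mem_divisors]
      constructor
      · rintro ⟨_, rfl⟩
        have hne : {k | 0 < k ∧ m ∣ Nat.fib k}.Nonempty := Nat.nonempty_of_pos_sInf hd0
        have := (Nat.sInf_mem hne).2
        exact ⟨⟨this.trans (Nat.fib_dvd _ _ hdn), hF⟩, rfl⟩
      · rintro ⟨⟨hm, _⟩, rfl⟩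
        have hs := (fibAlpha_spec hn hm).2
        have hp : 0 < Nat.fib (fibAlpha m) := Nat.fib_pos.2 hd0
        exact ⟨⟨Nat.pos_of_dvd_of_pos hs hp, Nat.le_of_dvd hp hs⟩, rfl⟩
    · intro m hm
      have := Nat.pos_of_mem_divisors (Finset.mem_filter.1 hm).1
      rw [ArithmeticFunction.liouville_apply this.ne']
  · intro m hm
    exact Nat.mem_divisors.2 ⟨fibAlpha_dvd hn (Nat.dvd_of_mem_divisors hm), hn⟩

/-- Indicator of the indices of square Fibonacci numbers. -/
def sqInd (n : ℕ) : ℂ := if n = 1 ∨ n = 2 ∨ n = 12 then 1 else 0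

theorem sqInd_hasSum (s : ℂ) :
    LSeriesHasSum sqInd s (1 + (2 : ℂ) ^ (-s) + (12 : ℂ) ^ (-s)) := by
  have h : HasSum (LSeries.term sqInd s) (∑ n ∈ ({1, 2, 12} : Finset ℕ), LSeries.term sqInd s n) := by
    apply hasSum_sum_of_ne_finset_zero
    intro n hn
    simp only [Finset.mem_insert, Finset.mem_singleton] at hn
    simp [LSeries.term, sqInd, hn]
  unfold LSeriesHasSum
  convert h using 1
  simp [LSeries.term, sqInd, Complex.cpow_neg, add_assoc]

theorem liouvilleAlpha_dirichlet_series (s : ℂ) (hs : 1 < s.re) :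
    ∑' n : ℕ, (liouvilleAlpha n : ℂ) / (n : ℂ) ^ s
      = (1 + (2 : ℂ) ^ (-s) + (12 : ℂ) ^ (-s)) *
          ∏' p : Nat.Primes, (1 - (p : ℂ) ^ (-s)) := by
  have hz : riemannZeta s ≠ 0 := riemannZeta_ne_zero_of_one_lt_re hs
  have hprod : ∏' p : Nat.Primes, (1 - (p : ℂ) ^ (-s)) = (riemannZeta s)⁻¹ := by
    have := ((riemannZeta_eulerProduct_hasProd hs).inv₀ hz).tprod_eq
    simpa using this
  have hmu : LSeries (fun n => ((ArithmeticFunction.moebius n : ℤ) : ℂ)) s = (riemannZeta s)⁻¹ := by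
    have h := ArithmeticFunction.LSeries_zeta_mul_Lseries_moebius hs
    rw [ArithmeticFunction.LSeries_zeta_eq_riemannZeta hs] at h
    exact eq_inv_of_mul_eq_one_right h
  have hinv := (ArithmeticFunction.sum_eq_iff_sum_mul_moebius_eq (R := ℂ)
    (f := fun n => (liouvilleAlpha n : ℂ)) (g := sqInd)).1 (by
      intro n hn
      have := sum_liouvilleAlpha n hn.ne'
      unfold sqInd
      exact_mod_cast congrArg (Int.cast : ℤ → ℂ) this)
  have hconv := (ArithmeticFunction.LSeriesSummable_moebius_iff.2 hs).LSeriesHasSum.convolution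
    (sqInd_hasSum s)
  rw [hmu] at hconv
  rw [hprod, mul_comm, ← hconv.LSeries_eq]
  unfold LSeries
  apply tsum_congr
  intro n
  rcases Nat.eq_zero_or_pos n with rfl | hn
  · simp [liouvilleAlpha]
  · rw [LSeries.term_of_ne_zero hn.ne', LSeries.convolution_def]
    simp only [hinv n hn]
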